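/- For all x, y ∈ S, either d[l](x,y) ≥ r(x), or d[l](x,y) = dᵢ(x,y) for some i ∈ I with x, y ∈ σᵢ(D). -/

import Mathlib

noncomputable section

open Set
open scoped ENNReal

/-- The Euclidean plane `ℝ²` with the Euclidean metric. -/
abbrev E2 : Type := EuclideanSpace ℝ (Fin 2)

/-- Vertices of the fixed closed regular (equilateral) triangle of side length 1. -/
def p0 : E2 := !₂[0, 0]
def p1 : E2 := !₂[1, 0]
def p2 : E2 := !₂[1 / 2, Real.sqrt 3 / 2]

/-- `Dtri` is the fixed closed regular triangle in `ℝ²` with edge length 1. -/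
def Dtri : Set E2 := convexHull ℝ {p0, p1, p2}

/-- `V0` is the set of the three vertices of `Dtri`. -/
def V0 : Set E2 := {p0, p1, p2}

/-- The three closed edges of `Dtri`. -/
def e01 : Set E2 := segment ℝ p0 p1
def e12 : Set E2 := segment ℝ p1 p2
def e02 : Set E2 := segment ℝ p0 p2

/-- `E0` is the set of the three closed edges of `Dtri`. -/
def E0 : Set (Set E2) := {e01, e12, e02}

/-- The open edge `e° = e ∖ V₀`. -/
def eo (e : Set E2) : Set E2 := e \ V0

/-- `Do = D°` is the interior of `Dtri` in `ℝ²`. -/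
def Do : Set E2 := interior Dtri

/-- `l : E₀ → ℝ` is positive and satisfies the strict triangle inequalities:
`l e₁ + l e₂ > l e₃` whenever `{e₁, e₂, e₃} = E₀`. -/
def TriIneq (l : Set E2 → ℝ) : Prop :=
  (∀ e ∈ E0, 0 < l e) ∧
  ∀ e₁ e₂ e₃ : Set E2, ({e₁, e₂, e₃} : Set (Set E2)) = E0 → l e₁ + l e₂ > l e₃

/-- A linear map `f : ℝ² → ℝ²` realizes the edge lengths `l`, i.e. for each `e ∈ E₀`
the segment `f(e)` has Euclidean length `l e`. -/
def Realizes (f : E2 →ₗ[ℝ] E2) (l : Set E2 → ℝ) : Prop :=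
  dist (f p0) (f p1) = l e01 ∧ dist (f p1) (f p2) = l e12 ∧ dist (f p0) (f p2) = l e02

/-- The metric `d[l]` on `Dtri`, defined by `d[l](x,y) = |f x - f y|₂` for a linear map `f`
realizing the edge lengths `l` (this is independent of the choice of `f`). -/
def dD (l : Set E2 → ℝ) (x y : E2) : ℝ :=
  letI := Classical.propDecidable (∃ f : E2 →ₗ[ℝ] E2, Realizes f l)
  if h : ∃ f : E2 →ₗ[ℝ] E2, Realizes f l then dist (h.choose x) (h.choose y) else 0

/-- A triangulation `T = (σᵢ)_{i ∈ I}`, `I = Fin n`, of a topological space `S`: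
a finite family of continuous maps `σᵢ : Dtri → S` such that
(a) `σᵢ` is injective on each open edge, (b) `σᵢ` is injective on `D°`,
(c) `S` is the disjoint union of `⋃ᵢ σᵢ(V₀)`, the sets `σᵢ(D°)`, and the distinct sets
among the `σᵢ(e°)`, and (d) glued edges are identified by a linear homeomorphism. -/
structure Triangulation (S : Type) [TopologicalSpace S] (n : ℕ) where
  σ : Fin n → E2 → S
  continuousOn : ∀ i, ContinuousOn (σ i) Dtri
  inj_edge : ∀ i, ∀ e ∈ E0, InjOn (σ i) (eo e)
  inj_int : ∀ i, InjOn (σ i) Do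
  cover : (⋃ i, σ i '' V0) ∪ (⋃ i, σ i '' Do) ∪ (⋃ i, ⋃ e ∈ E0, σ i '' eo e) = univ
  disj_int : ∀ i j, i ≠ j → Disjoint (σ i '' Do) (σ j '' Do)
  disj_vert_int : ∀ j, Disjoint (⋃ i, σ i '' V0) (σ j '' Do)
  disj_vert_edge : ∀ j, ∀ e ∈ E0, Disjoint (⋃ i, σ i '' V0) (σ j '' eo e)
  disj_int_edge : ∀ i j, ∀ e ∈ E0, Disjoint (σ i '' Do) (σ j '' eo e)
  edge_eq_or_disjoint : ∀ i j, ∀ e ∈ E0, ∀ e' ∈ E0,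
    σ i '' eo e = σ j '' eo e' ∨ Disjoint (σ i '' eo e) (σ j '' eo e')
  glue : ∀ i j, ∀ e ∈ E0, ∀ e' ∈ E0, σ i '' eo e = σ j '' eo e' →
    ∃ A : E2 →ᵃ[ℝ] E2, A '' e = e' ∧ ∀ x ∈ e, σ j (A x) = σ i x

variable {S : Type} [TopologicalSpace S] {n : ℕ}

/-- `l ∈ ℝ^{E(T)}_Δ`: `l` assigns positive lengths to the edges of `T` satisfying the
strict triangle inequalities in each triangle. -/
def TriIneqT (T : Triangulation S n) (l : Set S → ℝ) : Prop :=
  (∀ (i : Fin n), ∀ e ∈ E0, 0 < l (T.σ i '' e)) ∧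
  ∀ (i : Fin n), ∀ e₁ e₂ e₃ : Set E2, ({e₁, e₂, e₃} : Set (Set E2)) = E0 →
    l (T.σ i '' e₁) + l (T.σ i '' e₂) > l (T.σ i '' e₃)

/-- The restricted edge lengths `l^{(i)}` on the triangle `σᵢ(D)`: `l^{(i)}_e = l_{σᵢ(e)}`. -/
def lRes (T : Triangulation S n) (l : Set S → ℝ) (i : Fin n) : Set E2 → ℝ :=
  fun e => l (T.σ i '' e)

/-- `dᵢ(x,y) = min { d[l^{(i)}](x',y') : x' ∈ σᵢ⁻¹(x), y' ∈ σᵢ⁻¹(y) }` for `x, y ∈ σᵢ(D)`. -/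
def dTri (T : Triangulation S n) (l : Set S → ℝ) (i : Fin n) (x y : S) : ℝ :=
  sInf { r | ∃ x' ∈ Dtri, ∃ y' ∈ Dtri,
    T.σ i x' = x ∧ T.σ i y' = y ∧ r = dD (lRes T l i) x' y' }

/-- The set of sums `Σ_j d_{i_j}(x_{j-1}, x_j)` over chains from `x` to `y`. -/
def chainSums (T : Triangulation S n) (l : Set S → ℝ) (x y : S) : Set ℝ :=
  { r | ∃ (k : ℕ) (c : ℕ → S) (idx : ℕ → Fin n),
      c 0 = x ∧ c k = y ∧
      (∀ j < k, c j ∈ T.σ (idx j) '' Dtri ∧ c (j + 1) ∈ T.σ (idx j) '' Dtri) ∧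
      r = ∑ j ∈ Finset.range k, dTri T l (idx j) (c j) (c (j + 1)) }

/-- The glued metric `d[l]` on `S`. -/
def dGlue (T : Triangulation S n) (l : Set S → ℝ) (x y : S) : ℝ :=
  sInf (chainSums T l x y)

/-- `K(x)`: the union of the edges of `Dtri` not containing `x`. -/
def Kset (x : E2) : Set E2 := ⋃₀ {e ∈ E0 | x ∉ e}

/-- The distance from `x` to `K(x)` in `(Dtri, d[l'])`. -/
def rObs (l' : Set E2 → ℝ) (x : E2) : ℝ := sInf { r | ∃ y ∈ Kset x, r = dD l' x y }

/-- `r(x) = min { rᵢ(x') : i ∈ I, x' ∈ σᵢ⁻¹(x) }` for `x ∈ S`. -/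
def rS (T : Triangulation S n) (l : Set S → ℝ) (x : S) : ℝ :=
  sInf { r | ∃ i : Fin n, ∃ x' ∈ Dtri, T.σ i x' = x ∧ r = rObs (lRes T l i) x' }

lemma exists_bary {x : E2} (hx : x ∈ Dtri) : ∃ a b c : ℝ, 0 ≤ a ∧ 0 ≤ b ∧ 0 ≤ c ∧ a + b + c = 1 ∧
    x = a • p0 + b • p1 + c • p2 := by
  unfold Dtri at hx
  rw [convexHull_insert (by simp), convexHull_pair] at hx
  rw [mem_convexJoin] at hx
  obtain ⟨u, hu, v, hv, hx⟩ := hx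
  rw [mem_singleton_iff] at hu
  subst hu
  obtain ⟨s, t, hs, ht, hst, rfl⟩ := hv
  obtain ⟨s', t', hs', ht', hst', rfl⟩ := hx
  refine ⟨s', t' * s, t' * t, hs', by positivity, by positivity, ?_, ?_⟩
  · rw [add_assoc, ← mul_add, hst, mul_one, hst']
  · module

lemma bary_mem {a b c : ℝ} (ha : 0 ≤ a) (hb : 0 ≤ b) (hc : 0 ≤ c) (h : a + b + c = 1) :
    a • p0 + b • p1 + c • p2 ∈ Dtri := by
  have hconv : Convex ℝ Dtri := convex_convexHull ℝ _
  have hsub : ({p0, p1, p2} : Set E2) ⊆ Dtri := subset_convexHull ℝ _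
  have h0 : p0 ∈ Dtri := hsub (by simp)
  have h1 : p1 ∈ Dtri := hsub (by simp)
  have h2 : p2 ∈ Dtri := hsub (by simp)
  have := hconv.sum_mem (t := Finset.univ) (w := ![a, b, c]) (z := ![p0, p1, p2])
    (by intro i _; fin_cases i <;> simp [ha, hb, hc])
    (by simp [Fin.sum_univ_three, h])
    (by intro i _; fin_cases i <;> simp [h0, h1, h2])
  simpa [Fin.sum_univ_three] using this

lemma bary_interior {a b c : ℝ} (ha : 0 < a) (hb : 0 < b) (hc : 0 < c) (h : a + b + c = 1) :
    a • p0 + b • p1 + c • p2 ∈ Do := by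
  have h3 : (0 : ℝ) < Real.sqrt 3 := by positivity
  let U : Set E2 := {x | 0 < x 1 ∧ x 1 < Real.sqrt 3 * x 0 ∧ x 1 < Real.sqrt 3 * (1 - x 0)}
  have hU : IsOpen U := by
    have o1 : IsOpen {x : E2 | 0 < x 1} := isOpen_lt (by fun_prop) (by fun_prop)
    have o2 : IsOpen {x : E2 | x 1 < Real.sqrt 3 * x 0} := isOpen_lt (by fun_prop) (by fun_prop)
    have o3 : IsOpen {x : E2 | x 1 < Real.sqrt 3 * (1 - x 0)} :=
      isOpen_lt (by fun_prop) (by fun_prop)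
    exact o1.inter (o2.inter o3)
  have hUD : U ⊆ Dtri := by
    rintro x ⟨h1, h2, h4⟩
    have e1 : Real.sqrt 3 * (x 1 / Real.sqrt 3) = x 1 := by field_simp
    have hw : 0 < x 1 / Real.sqrt 3 := by positivity
    set w := x 1 / Real.sqrt 3 with hwdef
    have key : x = (1 - x 0 - w) • p0 + (x 0 - w) • p1 + (2 * w) • p2 := by
      ext i
      fin_cases i
      · simp [p0, p1, p2]; ring
      · simp [p0, p1, p2]; linarith
    rw [key]
    apply bary_mem
    · have : Real.sqrt 3 * w ≤ Real.sqrt 3 * (1 - x 0) := by rw [e1]; exact h4.le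
      have := le_of_mul_le_mul_left this h3
      linarith
    · have : Real.sqrt 3 * w ≤ Real.sqrt 3 * x 0 := by rw [e1]; exact h2.le
      have := le_of_mul_le_mul_left this h3
      linarith
    · linarith
    · ring
  refine interior_maximal hUD hU ?_
  have ha' : 1 - b - c = a := by linarith
  refine ⟨?_, ?_, ?_⟩
  · simp [p0, p1, p2]; positivity
  · simp [p0, p1, p2]; nlinarith [mul_pos h3 hb]
  · simp [p0, p1, p2]; nlinarith [mul_pos h3 ha]

lemma D_decomp {x : E2} (hx : x ∈ Dtri) : x ∈ V0 ∨ x ∈ Do ∨ ∃ e ∈ E0, x ∈ eo e := by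
  obtain ⟨a, b, c, ha, hb, hc, h, rfl⟩ := exists_bary hx
  by_cases hV : a • p0 + b • p1 + c • p2 ∈ V0
  · exact Or.inl hV
  right
  rcases ha.eq_or_lt with rfl | ha
  · right
    exact ⟨e12, by simp [E0], ⟨b, c, hb, hc, by linarith, by module⟩, hV⟩
  rcases hb.eq_or_lt with rfl | hb
  · right
    exact ⟨e02, by simp [E0], ⟨a, c, ha.le, hc, by linarith, by module⟩, hV⟩
  rcases hc.eq_or_lt with rfl | hc
  · right
    exact ⟨e01, by simp [E0], ⟨a, b, ha.le, hb.le, by linarith, by module⟩, hV⟩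
  exact Or.inl (bary_interior ha hb hc h)

lemma edge_sub {e : Set E2} (he : e ∈ E0) : e ⊆ Dtri := by
  have hconv : Convex ℝ Dtri := convex_convexHull ℝ _
  have hsub : ({p0, p1, p2} : Set E2) ⊆ Dtri := subset_convexHull ℝ _
  have h0 : p0 ∈ Dtri := hsub (by simp)
  have h1 : p1 ∈ Dtri := hsub (by simp)
  have h2 : p2 ∈ Dtri := hsub (by simp)
  rcases he with rfl | rfl | rfl
  · exact hconv.segment_subset h0 h1
  · exact hconv.segment_subset h1 h2
  · exact hconv.segment_subset h0 h2

lemma vertex_unique {x z : E2} (hz : z ∈ V0) (h : z ∉ Kset x) : x = z := by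
  have h3 : (0 : ℝ) < Real.sqrt 3 := by positivity
  have key : ∀ e ∈ E0, z ∈ e → x ∈ e := by
    intro e he hze
    by_contra hx
    exact h ⟨e, ⟨he, hx⟩, hze⟩
  have k01 := key e01 (by simp [E0])
  have k12 := key e12 (by simp [E0])
  have k02 := key e02 (by simp [E0])
  rcases hz with rfl | rfl | rfl
  · obtain ⟨a, b, ha, hb, hab, hx⟩ := k01 (left_mem_segment ℝ _ _)
    obtain ⟨a', b', ha', hb', hab', hx'⟩ := k02 (left_mem_segment ℝ _ _)
    have q1 := congrArg (fun v : E2 => v 1) (hx.trans hx'.symm)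
    simp [p0, p1, p2, h3.ne'] at q1
    rw [← hx', show a' = 1 by linarith, q1]; simp
  · obtain ⟨a, b, ha, hb, hab, hx⟩ := k01 (right_mem_segment ℝ _ _)
    obtain ⟨a', b', ha', hb', hab', hx'⟩ := k12 (left_mem_segment ℝ _ _)
    have q1 := congrArg (fun v : E2 => v 1) (hx.trans hx'.symm)
    simp [p0, p1, p2, h3.ne'] at q1
    rw [← hx', show a' = 1 by linarith, q1]; simp
  · obtain ⟨a, b, ha, hb, hab, hx⟩ := k02 (right_mem_segment ℝ _ _)
    obtain ⟨a', b', ha', hb', hab', hx'⟩ := k12 (right_mem_segment ℝ _ _)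
    have q1 := congrArg (fun v : E2 => v 1) (hx.trans hx'.symm)
    have q0 := congrArg (fun v : E2 => v 0) (hx.trans hx'.symm)
    simp [p0, p1, p2, h3.ne'] at q1 q0
    have hbb : b = b' := q1
    subst hbb
    have ha0 : a' = 0 := by linarith
    rw [← hx', ha0, show b = 1 by linarith]; simp

lemma exists_realizes {l : Set E2 → ℝ} (hl : TriIneq l) : ∃ f : E2 →ₗ[ℝ] E2, Realizes f l := by
  obtain ⟨hpos, htri⟩ := hl
  have h3 : (0 : ℝ) < Real.sqrt 3 := by positivity
  have ha := hpos e01 (by simp [E0])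
  have hs := hpos e12 (by simp [E0])
  have hb := hpos e02 (by simp [E0])
  have t1 := htri e01 e12 e02 rfl
  have t2 := htri e12 e02 e01 (by ext; simp [E0]; tauto)
  have t3 := htri e02 e01 e12 (by ext; simp [E0]; tauto)
  unfold Realizes
  generalize l e01 = a at *
  generalize l e12 = s at *
  generalize l e02 = b at *
  obtain ⟨c, hc⟩ : ∃ c, 2 * a * c = a ^ 2 + b ^ 2 - s ^ 2 :=
    ⟨(a ^ 2 + b ^ 2 - s ^ 2) / (2 * a), by field_simp⟩
  have hcb1 : c ≤ b := by
    have : 2 * a * c ≤ 2 * a * b := by nlinarith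
    exact le_of_mul_le_mul_left this (by linarith)
  have hcb2 : -b ≤ c := by
    have : 2 * a * (-b) ≤ 2 * a * c := by nlinarith
    exact le_of_mul_le_mul_left this (by linarith)
  have hnn : 0 ≤ b ^ 2 - c ^ 2 := by nlinarith
  obtain ⟨h, hh⟩ : ∃ h, h ^ 2 = b ^ 2 - c ^ 2 := ⟨_, Real.sq_sqrt hnn⟩
  let f : E2 →ₗ[ℝ] E2 :=
    { toFun := fun x => !₂[a * x 0 + (2 * c - a) / Real.sqrt 3 * x 1, 2 * h / Real.sqrt 3 * x 1]
      map_add' := by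
        intro x y
        ext i; fin_cases i <;> simp <;> ring
      map_smul' := by
        intro r x
        ext i; fin_cases i <;> simp <;> ring }
  have f0 : f p0 = !₂[0, 0] := by
    ext i; fin_cases i <;> simp [f, p0]
  have f1 : f p1 = !₂[a, 0] := by
    ext i; fin_cases i <;> simp [f, p1]
  have f2 : f p2 = !₂[c, h] := by
    ext i; fin_cases i
    · simp [f, p2]; field_simp; ring
    · simp [f, p2]; field_simp
  refine ⟨f, ?_, ?_, ?_⟩
  · rw [f0, f1, EuclideanSpace.dist_eq, Real.sqrt_eq_iff_mul_self_eq_of_pos ha]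
    simp [Fin.sum_univ_two, Real.dist_eq, sq_abs]; ring
  · rw [f1, f2, EuclideanSpace.dist_eq, Real.sqrt_eq_iff_mul_self_eq_of_pos hs]
    simp [Fin.sum_univ_two, Real.dist_eq, sq_abs]; nlinarith
  · rw [f0, f2, EuclideanSpace.dist_eq, Real.sqrt_eq_iff_mul_self_eq_of_pos hb]
    simp [Fin.sum_univ_two, Real.dist_eq, sq_abs]; nlinarith

lemma dD_spec {l : Set E2 → ℝ} (hl : TriIneq l) :
    ∃ f : E2 →ₗ[ℝ] E2, Realizes f l ∧ ∀ x y, dD l x y = dist (f x) (f y) := by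
  have h := exists_realizes hl
  refine ⟨h.choose, h.choose_spec, fun x y => ?_⟩
  unfold dD
  rw [dif_pos h]

lemma dD_nonneg (l : Set E2 → ℝ) (x y : E2) : 0 ≤ dD l x y := by
  unfold dD
  split_ifs
  · exact dist_nonneg
  · exact le_rfl

lemma dD_self (l : Set E2 → ℝ) (x : E2) : dD l x x = 0 := by
  unfold dD
  split_ifs <;> simp

lemma dD_triangle (l : Set E2 → ℝ) (x y z : E2) : dD l x z ≤ dD l x y + dD l y z := by
  unfold dD
  split_ifs
  · exact dist_triangle _ _ _
  · simp

lemma diam_segment' (p q : E2) : Metric.diam (segment ℝ p q) = dist p q := by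
  rw [← convexHull_pair, convexHull_diam, Metric.diam_pair]

lemma realizes_diam {l : Set E2 → ℝ} {f : E2 →ₗ[ℝ] E2} (hf : Realizes f l) {e : Set E2}
    (he : e ∈ E0) : Metric.diam (f '' e) = l e := by
  have key : ∀ p q : E2, Metric.diam (f '' segment ℝ p q) = dist (f p) (f q) := by
    intro p q
    have := image_segment ℝ f.toAffineMap p q
    rw [← diam_segment']
    exact congrArg Metric.diam this
  obtain ⟨h1, h2, h3⟩ := hf
  rcases he with rfl | rfl | rfl
  · exact (key _ _).trans h1
  · exact (key _ _).trans h2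
  · exact (key _ _).trans h3

lemma edge_seg {e : Set E2} (he : e ∈ E0) : ∃ p q, e = segment ℝ p q := by
  rcases he with rfl | rfl | rfl
  · exact ⟨_, _, rfl⟩
  · exact ⟨_, _, rfl⟩
  · exact ⟨_, _, rfl⟩

/-- Distances on a segment under an affine map are determined by the diameter of the image. -/
lemma dist_affine_segment (g g' : E2 →ᵃ[ℝ] E2) (p q : E2)
    (h : Metric.diam (g '' segment ℝ p q) = Metric.diam (g' '' segment ℝ p q))
    {x y : E2} (hx : x ∈ segment ℝ p q) (hy : y ∈ segment ℝ p q) :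
    dist (g x) (g y) = dist (g' x) (g' y) := by
  rw [image_segment, image_segment, diam_segment', diam_segment'] at h
  rw [segment_eq_image_lineMap] at hx hy
  obtain ⟨s, _, rfl⟩ := hx
  obtain ⟨t, _, rfl⟩ := hy
  rw [AffineMap.apply_lineMap, AffineMap.apply_lineMap, AffineMap.apply_lineMap,
    AffineMap.apply_lineMap, dist_lineMap_lineMap, dist_lineMap_lineMap, h]

lemma triIneq_lRes {S : Type} [TopologicalSpace S] {n : ℕ} (T : Triangulation S n)
    (l : Set S → ℝ) (hl : TriIneqT T l) (i : Fin n) : TriIneq (lRes T l i) :=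
  ⟨hl.1 i, hl.2 i⟩

lemma glue_step {S : Type} [TopologicalSpace S] {n : ℕ} (T : Triangulation S n)
    (l : Set S → ℝ) (hl : TriIneqT T l) {i m : Fin n} {x z w : E2} (hx : x ∈ Dtri)
    (hz : z ∈ Dtri) (hw : w ∈ Dtri) (hzw : T.σ i z = T.σ m w) (hK : z ∉ Kset x) :
    ∃ x' ∈ Dtri, T.σ m x' = T.σ i x ∧ dD (lRes T l m) x' w = dD (lRes T l i) x z := by
  rcases D_decomp hz with hz' | hz' | ⟨e, he, hz'⟩
  · have := vertex_unique hz' hK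
    subst this
    exact ⟨w, hw, hzw.symm, by rw [dD_self, dD_self]⟩
  · have hw' : w ∈ Do := by
      rcases D_decomp hw with h | h | ⟨e, he, h⟩
      · exact absurd (mem_image_of_mem _ hz') (disjoint_left.mp (T.disj_vert_int i)
          (mem_iUnion.mpr ⟨m, w, h, hzw.symm⟩))
      · exact h
      · exact absurd ⟨w, h, hzw.symm⟩ (disjoint_left.mp (T.disj_int_edge i m e he)
          (mem_image_of_mem _ hz'))
    have him : i = m := by
      by_contra hne
      exact disjoint_left.mp (T.disj_int i m hne) (mem_image_of_mem _ hz') ⟨w, hw', hzw.symm⟩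
    subst him
    have := T.inj_int i hz' hw' hzw
    subst this
    exact ⟨x, hx, rfl, rfl⟩
  · have hzV : ∀ j, ∀ v ∈ V0, T.σ j v ≠ T.σ i z := fun j v hv hh =>
      disjoint_left.mp (T.disj_vert_edge i e he) (mem_iUnion.mpr ⟨j, v, hv, hh⟩)
        (mem_image_of_mem _ hz')
    obtain ⟨e', he', hw'⟩ : ∃ e' ∈ E0, w ∈ eo e' := by
      rcases D_decomp hw with h | h | h
      · exact absurd hzw.symm (hzV m w h)
      · exact absurd (mem_image_of_mem _ hz') (disjoint_left.mp (T.disj_int_edge m i e he)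
          ⟨w, h, hzw.symm⟩)
      · exact h
    have heq : T.σ i '' eo e = T.σ m '' eo e' := by
      rcases T.edge_eq_or_disjoint i m e he e' he' with h | h
      · exact h
      · exact absurd ⟨w, hw', hzw.symm⟩ (disjoint_left.mp h (mem_image_of_mem _ hz'))
    obtain ⟨A, hA, hAσ⟩ := T.glue i m e he e' he' heq
    have hxe : x ∈ e := by
      by_contra hh
      exact hK ⟨e, ⟨he, hh⟩, hz'.1⟩
    have hAz : A z = w := by
      refine T.inj_edge m e' he' ⟨hA ▸ mem_image_of_mem _ hz'.1, fun hv => ?_⟩ hw' ?_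
      · exact hzV m _ hv (hAσ z hz'.1)
      · rw [hAσ z hz'.1, hzw]
    refine ⟨A x, edge_sub he' (hA ▸ mem_image_of_mem _ hxe), hAσ x hxe, ?_⟩
    have hlen : lRes T l m e' = lRes T l i e := by
      unfold lRes
      rw [← hA, image_image]
      exact congrArg l (image_congr hAσ)
    obtain ⟨f, hf, hfd⟩ := dD_spec (triIneq_lRes T l hl i)
    obtain ⟨g, hg, hgd⟩ := dD_spec (triIneq_lRes T l hl m)
    rw [hfd, hgd, ← hAz]
    have hd : Metric.diam ((g.toAffineMap.comp A) '' e) = Metric.diam (f.toAffineMap '' e) := by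
      have h1 := realizes_diam hf he
      have h2 := realizes_diam hg he'
      rw [← hA, image_image, hA, hlen, ← h1] at h2
      exact h2
    obtain ⟨p, q, rfl⟩ := edge_seg he
    exact dist_affine_segment _ _ p q hd hxe hz'.1

lemma dTri_nonneg {S : Type} [TopologicalSpace S] {n : ℕ} (T : Triangulation S n)
    (l : Set S → ℝ) (i : Fin n) (x y : S) : 0 ≤ dTri T l i x y := by
  apply Real.sInf_nonneg
  rintro r ⟨x', _, y', _, _, _, rfl⟩
  exact dD_nonneg _ _ _

lemma dTri_le {S : Type} [TopologicalSpace S] {n : ℕ} (T : Triangulation S n)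
    (l : Set S → ℝ) (i : Fin n) {x y : E2} (hx : x ∈ Dtri) (hy : y ∈ Dtri) :
    dTri T l i (T.σ i x) (T.σ i y) ≤ dD (lRes T l i) x y := by
  apply csInf_le
  · refine ⟨0, ?_⟩
    rintro r ⟨x', _, y', _, _, _, rfl⟩
    exact dD_nonneg _ _ _
  · exact ⟨x, hx, y, hy, rfl, rfl, rfl⟩

lemma rObs_nonneg (l : Set E2 → ℝ) (x : E2) : 0 ≤ rObs l x := by
  apply Real.sInf_nonneg
  rintro r ⟨y, _, rfl⟩
  exact dD_nonneg _ _ _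

lemma rS_le {S : Type} [TopologicalSpace S] {n : ℕ} (T : Triangulation S n)
    (l : Set S → ℝ) (i : Fin n) {x z : E2} (hx : x ∈ Dtri) (hz : z ∈ Kset x) :
    rS T l (T.σ i x) ≤ dD (lRes T l i) x z := by
  have h1 : rS T l (T.σ i x) ≤ rObs (lRes T l i) x := by
    apply csInf_le
    · refine ⟨0, ?_⟩
      rintro r ⟨j, x', _, _, rfl⟩
      exact rObs_nonneg _ _
    · exact ⟨i, x, hx, rfl, rfl⟩
  refine h1.trans ?_
  apply csInf_le
  · refine ⟨0, ?_⟩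
    rintro r ⟨y, _, rfl⟩
    exact dD_nonneg _ _ _
  · exact ⟨z, hz, rfl⟩

lemma exists_mem {S : Type} [TopologicalSpace S] {n : ℕ} (T : Triangulation S n) (x : S) :
    ∃ i, x ∈ T.σ i '' Dtri := by
  have hx : x ∈ (univ : Set S) := mem_univ x
  rw [← T.cover] at hx
  rcases hx with (hx | hx) | hx
  · obtain ⟨i, hi⟩ := mem_iUnion.mp hx
    exact ⟨i, image_mono (subset_convexHull ℝ _) hi⟩
  · obtain ⟨i, hi⟩ := mem_iUnion.mp hx
    exact ⟨i, image_mono interior_subset hi⟩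
  · simp only [mem_iUnion] at hx
    obtain ⟨i, e, he, hi⟩ := hx
    exact ⟨i, image_mono (sdiff_subset.trans (edge_sub he)) hi⟩

lemma chain_bound {S : Type} [TopologicalSpace S] {n : ℕ} (T : Triangulation S n)
    (l : Set S → ℝ) (hl : TriIneqT T l) (x : S) (c : ℕ → S) (idx : ℕ → Fin n) (h0 : c 0 = x)
    (k : ℕ) (hc : ∀ j < k, c j ∈ T.σ (idx j) '' Dtri ∧ c (j + 1) ∈ T.σ (idx j) '' Dtri) :
    ∀ t, t ≤ rS T l x → ∑ j ∈ Finset.range k, dTri T l (idx j) (c j) (c (j + 1)) < t →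
      ∃ i, ∃ x' ∈ Dtri, ∃ z' ∈ Dtri, T.σ i x' = x ∧ T.σ i z' = c k ∧
        dD (lRes T l i) x' z' < t := by
  induction k with
  | zero =>
    intro t _ hlt
    obtain ⟨i, x', hx', hxx⟩ := exists_mem T x
    refine ⟨i, x', hx', x', hx', hxx, hxx.trans h0.symm, ?_⟩
    rw [dD_self]
    simpa using hlt
  | succ k ih =>
    intro t ht hlt
    rw [Finset.sum_range_succ] at hlt
    obtain ⟨⟨u, hu, huc⟩, ⟨v, hv, hvc⟩⟩ := hc k (Nat.lt_succ_self k)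
    have hlt' : dTri T l (idx k) (c k) (c (k + 1)) <
        t - ∑ j ∈ Finset.range k, dTri T l (idx j) (c j) (c (j + 1)) := by linarith
    obtain ⟨r, ⟨w, hw, y, hy, hwc, hyc, rfl⟩, hr⟩ :=
      exists_lt_of_csInf_lt (show Set.Nonempty { r | ∃ x' ∈ Dtri, ∃ y' ∈ Dtri,
        T.σ (idx k) x' = c k ∧ T.σ (idx k) y' = c (k + 1) ∧ r = dD (lRes T l (idx k)) x' y' }
        from ⟨_, u, hu, v, hv, huc, hvc, rfl⟩) hlt'
    have hnn := dD_nonneg (lRes T l (idx k)) w y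
    obtain ⟨i, x', hx', z', hz', hxx, hzz, hd⟩ :=
      ih (fun j hj => hc j (hj.trans (Nat.lt_succ_self k)))
        (t - dD (lRes T l (idx k)) w y) (by linarith) (by linarith)
    have hK : z' ∉ Kset x' := by
      intro hK
      have := rS_le T l i hx' hK
      rw [hxx] at this
      linarith
    obtain ⟨x'', hx'', hσ, hdd⟩ := glue_step T l hl hx' hz' hw (hzz.trans hwc.symm) hK
    refine ⟨idx k, x'', hx'', y, hy, hσ.trans hxx, hyc, ?_⟩
    have := dD_triangle (lRes T l (idx k)) x'' w y
    linarith

lemma isCompact_Dtri : IsCompact Dtri := by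
  unfold Dtri
  exact Set.Finite.isCompact_convexHull ℝ (by simp)

lemma chain_snoc {S : Type} [TopologicalSpace S] {n : ℕ} (T : Triangulation S n)
    (l : Set S → ℝ) {x y z : S} (h : (chainSums T l x y).Nonempty) {i : Fin n}
    (hy : y ∈ T.σ i '' Dtri) (hz : z ∈ T.σ i '' Dtri) : (chainSums T l x z).Nonempty := by
  obtain ⟨_, k, c, idx, h0, hk, hc, _⟩ := h
  refine ⟨_, k + 1, fun j => if j ≤ k then c j else z, fun j => if j < k then idx j else i,
    by simp [h0], by simp, ?_, rfl⟩
  intro j hj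
  rcases (Nat.lt_succ_iff.mp hj).eq_or_lt with rfl | hlt
  · simp [hk, hy, hz]
  · simp only [hlt.le, if_true, hlt, Nat.succ_le_of_lt hlt]
    exact hc j hlt

lemma chain_nonempty {S : Type} [TopologicalSpace S] [T2Space S] [ConnectedSpace S] {n : ℕ}
    (T : Triangulation S n) (l : Set S → ℝ) (x y : S) : (chainSums T l x y).Nonempty := by
  let R : Set S := {z | (chainSums T l x z).Nonempty}
  have hcl : ∀ i, IsClosed (T.σ i '' Dtri) := fun i =>
    (isCompact_Dtri.image_of_continuousOn (T.continuousOn i)).isClosed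
  have hR : R = ⋃ i ∈ {i | (T.σ i '' Dtri ∩ R).Nonempty}, T.σ i '' Dtri := by
    ext z
    simp only [mem_iUnion, exists_prop]
    constructor
    · intro hz
      obtain ⟨i, hi⟩ := exists_mem T z
      exact ⟨i, ⟨z, hi, hz⟩, hi⟩
    · rintro ⟨i, ⟨u, hu, huR⟩, hz⟩
      exact chain_snoc T l huR hu hz
  have hRc : Rᶜ = ⋃ i ∈ {i | ¬ (T.σ i '' Dtri ∩ R).Nonempty}, T.σ i '' Dtri := by
    ext z
    simp only [mem_iUnion, exists_prop]
    constructor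
    · intro hz
      obtain ⟨i, hi⟩ := exists_mem T z
      refine ⟨i, ?_, hi⟩
      rintro ⟨u, hu, huR⟩
      exact hz (chain_snoc T l huR hu hi)
    · rintro ⟨i, hi, hz⟩ hzR
      exact hi ⟨z, hz, hzR⟩
  have h1 : IsClosed R := by
    rw [hR]
    exact (Set.toFinite _).isClosed_biUnion fun i _ => hcl i
  have h2 : IsClosed Rᶜ := by
    rw [hRc]
    exact (Set.toFinite _).isClosed_biUnion fun i _ => hcl i
  have hx : x ∈ R := ⟨_, 0, fun _ => x, fun _ => (exists_mem T x).choose, rfl, rfl,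
    by simp, rfl⟩
  have : R = univ := IsClopen.eq_univ ⟨h1, isClosed_compl_iff.mp h2⟩ ⟨x, hx⟩
  have hy : y ∈ R := this ▸ mem_univ y
  exact hy

lemma dGlue_le_dTri {S : Type} [TopologicalSpace S] {n : ℕ} (T : Triangulation S n)
    (l : Set S → ℝ) {x y : S} {i : Fin n} (hx : x ∈ T.σ i '' Dtri) (hy : y ∈ T.σ i '' Dtri) :
    dGlue T l x y ≤ dTri T l i x y := by
  apply csInf_le
  · refine ⟨0, ?_⟩
    rintro r ⟨k, c, idx, _, _, _, rfl⟩
    exact Finset.sum_nonneg fun j _ => dTri_nonneg _ _ _ _ _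
  · refine ⟨1, fun j => if j = 0 then x else y, fun _ => i, by simp, by simp, ?_, by simp⟩
    intro j hj
    obtain rfl : j = 0 := by omega
    simp [hx, hy]

/-- Proposition 3.4: for all `x, y ∈ S`, either `d[l](x,y) ≥ r(x)`, or
`d[l](x,y) = dᵢ(x,y)` for some `i ∈ I` with `x, y ∈ σᵢ(D)`. -/
theorem dGlue_ge_rS_or_eq_dTri
    {S : Type} [TopologicalSpace S] [CompactSpace S] [T2Space S] [ConnectedSpace S]
    {n : ℕ} (T : Triangulation S n) (l : Set S → ℝ) (hl : TriIneqT T l) :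
    ∀ x y : S, dGlue T l x y ≥ rS T l x ∨
      ∃ i : Fin n, x ∈ T.σ i '' Dtri ∧ y ∈ T.σ i '' Dtri ∧
        dGlue T l x y = dTri T l i x y := by
  intro x y
  by_cases hlt : dGlue T l x y ≥ rS T l x
  · exact Or.inl hlt
  right
  push Not at hlt
  have key : ∀ t, t ≤ rS T l x → dGlue T l x y < t →
      ∃ i, (x ∈ T.σ i '' Dtri ∧ y ∈ T.σ i '' Dtri) ∧ dTri T l i x y < t := by
    intro t ht hdt
    obtain ⟨r, ⟨k, c, idx, h0, hk, hc, rfl⟩, hr⟩ :=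
      exists_lt_of_csInf_lt (chain_nonempty T l x y) hdt
    obtain ⟨i, x', hx', z', hz', hxx, hzz, hd⟩ := chain_bound T l hl x c idx h0 k hc t ht hr
    have := dTri_le T l i hx' hz'
    rw [hk] at hzz
    rw [hxx, hzz] at this
    exact ⟨i, ⟨⟨x', hx', hxx⟩, ⟨z', hz', hzz⟩⟩, this.trans_lt hd⟩
  obtain ⟨i1, hi1, _⟩ := key _ le_rfl hlt
  obtain ⟨i, hi, hmin⟩ := Set.exists_min_image
    {i : Fin n | x ∈ T.σ i '' Dtri ∧ y ∈ T.σ i '' Dtri} (fun i => dTri T l i x y)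
    (Set.toFinite _) ⟨i1, hi1⟩
  refine ⟨i, hi.1, hi.2, le_antisymm (dGlue_le_dTri T l hi.1 hi.2) ?_⟩
  by_contra hcon
  push Not at hcon
  obtain ⟨j, hj, hjt⟩ := key (min (dTri T l i x y) (rS T l x)) (min_le_right _ _)
    (lt_min hcon hlt)
  have h1 := hmin j hj
  have h2 := min_le_left (dTri T l i x y) (rS T l x)
  linarith
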